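/- arXiv:1606.08621 — 2 statements merged into one kernel-verified Lean document; each statement's English description precedes it below -/
import Mathlib

section
/- Let G be a graph with X the projective toric subset it parameterizes, and let H_1, H_2 be subgraphs of G (each with no isolated vertices) such that E_G = E_{H_1} ∪ E_{H_2} and E_{H_1} ∩ E_{H_2} ≠ ∅. Let X_1 and X_2 be the projective toric subsets parameterized by H_1 and H_2, respectively. Then reg(G) ≤ reg(H_1) + reg(H_2). -/
open MvPolynomial

/-- A finite multigraph without loops: each edge `e` has two distinct endpoints
`fst e` and `snd e`.  Multiple edges with the same endpoints are allowed. -/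
structure Multigraph (V E : Type) : Type where
  fst : E → V
  snd : E → V
  ne : ∀ e, fst e ≠ snd e

namespace Multigraph

variable {V E : Type}

/-- Vertex `v` is an endpoint of the edge `e`. -/
def Incident (G : Multigraph V E) (v : V) (e : E) : Prop :=
  G.fst e = v ∨ G.snd e = v

instance (G : Multigraph V E) [DecidableEq V] (v : V) : DecidablePred (G.Incident v) :=
  fun e => inferInstanceAs (Decidable (G.fst e = v ∨ G.snd e = v))

/-- The degree of a vertex: the number of edges incident to it. -/
noncomputable def degree (G : Multigraph V E) (v : V) : ℕ :=
  Nat.card {e : E // G.Incident v e}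

/-- The graph has no isolated vertices. -/
def NoIsolated (G : Multigraph V E) : Prop :=
  ∀ v : V, ∃ e : E, G.Incident v e

variable (K : Type) [Field K] [Fintype K]

/-- The point of the affine torus associated with an assignment `x` of nonzero
scalars to the vertices: its coordinate at an edge `e = {v,w}` is `x v * x w`. -/
def point (G : Multigraph V E) (x : V → Kˣ) : E → K :=
  fun e => (x (G.fst e) : K) * (x (G.snd e) : K)

/-- The projective toric subset `X` parameterized by `G`, realized as the set of
`Kˣ`-orbits (i.e. projective points) of the points `G.point K x`, `x : V → Kˣ`. -/
def toricSet (G : Multigraph V E) : Set (Set (E → K)) :=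
  Set.range fun x : V → Kˣ => MulAction.orbit Kˣ (G.point K x)

/-- The vanishing ideal `I(X)` of the projective toric subset parameterized by `G`:
the ideal of all polynomials each of whose homogeneous components vanishes at the
point `G.point K x` for every `x : V → Kˣ`. -/
def vanishingIdeal (G : Multigraph V E) : Ideal (MvPolynomial E K) where
  carrier := {f | ∀ (x : V → Kˣ) (d : ℕ), eval (G.point K x) (homogeneousComponent d f) = 0}
  zero_mem' := by intro x d; simp
  add_mem' := by
    intro a b ha hb x d
    rw [map_add, map_add, ha x d, hb x d, add_zero]
  smul_mem' := by
    intro c f hf x n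
    rw [smul_eq_mul, ← sum_homogeneousComponent f, Finset.mul_sum, map_sum, map_sum]
    refine Finset.sum_eq_zero fun d _ => ?_
    nth_rewrite 1 [← sum_homogeneousComponent c]
    rw [Finset.sum_mul, map_sum, map_sum]
    refine Finset.sum_eq_zero fun e _ => ?_
    have h1 : (homogeneousComponent e c * homogeneousComponent d f).IsHomogeneous (e + d) :=
      (homogeneousComponent_isHomogeneous e c).mul (homogeneousComponent_isHomogeneous d f)
    rw [homogeneousComponent_of_mem ((mem_homogeneousSubmodule _ _).mpr h1)]
    split_ifs
    · rw [map_mul, hf x d, mul_zero]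
    · simp

/-- The Hilbert function of `S/I(X)`: the dimension over `K` of the degree-`d`
homogeneous component of the quotient, realized as the image of the space of
degree-`d` homogeneous polynomials in the quotient. -/
noncomputable def hilbert (G : Multigraph V E) (d : ℕ) : ℕ :=
  Module.finrank K
    ((homogeneousSubmodule E K d).map (Ideal.Quotient.mkₐ K (G.vanishingIdeal K)).toLinearMap)

/-- The regularity `reg G`: the least `d` such that the Hilbert function of `S/I(X)`
at `d` equals the number of points of `X`. -/
noncomputable def reg (G : Multigraph V E) : ℕ :=
  sInf {d : ℕ | G.hilbert K d = (G.toricSet K).ncard}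

/-- The graph obtained from `G` by deleting a vertex `v` and all edges incident
to it. -/
def deleteVert (G : Multigraph V E) (v : V) :
    Multigraph {w : V // w ≠ v} {e : E // ¬ G.Incident v e} where
  fst e := ⟨G.fst e.1, fun h => e.2 (Or.inl h)⟩
  snd e := ⟨G.snd e.1, fun h => e.2 (Or.inr h)⟩
  ne e h := G.ne e.1 (congrArg Subtype.val h)

/-- The graph obtained from `G` by identifying the vertex `v₂` with the vertex `v₁`:
the edges are the same, and every endpoint equal to `v₂` is replaced by `v₁`.
This requires that `{v₁, v₂}` is a non-edge of `G`, so that no loops are created. -/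
def identifyVert [DecidableEq V] (G : Multigraph V E) (v₁ v₂ : V) (h12 : v₁ ≠ v₂)
    (h : ∀ e, ¬ (G.Incident v₁ e ∧ G.Incident v₂ e)) :
    Multigraph {w : V // w ≠ v₂} E where
  fst e := ⟨if G.fst e = v₂ then v₁ else G.fst e, by split_ifs with hh; exacts [h12, hh]⟩
  snd e := ⟨if G.snd e = v₂ then v₁ else G.snd e, by split_ifs with hh; exacts [h12, hh]⟩
  ne := by
    intro e heq
    rw [Subtype.ext_iff] at heq
    simp only at heq
    split_ifs at heq with h1 h2 h2
    · exact G.ne e (h1.trans h2.symm)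
    · exact h e ⟨Or.inr heq.symm, Or.inl h1⟩
    · exact h e ⟨Or.inl heq, Or.inr h2⟩
    · exact G.ne e heq

/-- The subgraph of `G` determined by a set `A` of edges of `G`, together with all
endpoints of those edges (so it has no isolated vertices). -/
def subgraph [DecidableEq V] (G : Multigraph V E) (A : Finset E) :
    Multigraph {v : V // ∃ e ∈ A, G.Incident v e} {e : E // e ∈ A} where
  fst e := ⟨G.fst e.1, e.1, e.2, Or.inl rfl⟩
  snd e := ⟨G.snd e.1, e.1, e.2, Or.inr rfl⟩
  ne e h := G.ne e.1 (congrArg Subtype.val h)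

end Multigraph

/-- The vertex of the parallel composition of paths of lengths `k i` lying on the
`i`-th path at distance `j` from the common initial vertex:  `j = 0` gives the common
initial vertex, `j = k i` the common terminal vertex, and `0 < j < k i` gives the
`j`-th interior vertex of the `i`-th path. -/
def pcVert {ι : Type} (k : ι → ℕ) (i : ι) (j : ℕ) :
    Bool ⊕ ((i : ι) × Fin (k i - 1)) :=
  if h0 : j = 0 then Sum.inl false
  else if h : j < k i then Sum.inr ⟨i, ⟨j - 1, by omega⟩⟩
  else Sum.inl true

/-- The parallel composition of the family of paths `P i` of lengths `k i` (`i : ι`):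
the `i`-th path has `k i` edges indexed by `Fin (k i)`, its `j`-th edge joining the
vertices of the `i`-th path at distances `j` and `j + 1` from the common initial
vertex.  All the initial vertices of the paths are identified to a single vertex and
all the terminal vertices are identified to a single vertex. -/
def parallelComp {ι : Type} (k : ι → ℕ) :
    Multigraph (Bool ⊕ ((i : ι) × Fin (k i - 1))) ((i : ι) × Fin (k i)) where
  fst e := pcVert k e.1 e.2.1
  snd e := pcVert k e.1 (e.2.1 + 1)
  ne := by
    rintro ⟨i, j⟩ h
    have hj := j.2
    simp only [pcVert] at h
    split_ifs at h <;> simp_all <;> omega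

/-- The monomial `f i`: the product of the edges of the `i`-th path of the parallel
composition in odd positions (positions `1, 3, 5, ...`, i.e. indices `0, 2, 4, ...`). -/
noncomputable def oddProd {ι : Type} (K : Type) [Field K] (k : ι → ℕ) (i : ι) :
    MvPolynomial ((i : ι) × Fin (k i)) K :=
  ∏ m : Fin ((k i + 1) / 2), X ⟨i, ⟨2 * m.1, by have := m.2; omega⟩⟩

/-- The monomial `g i`: the product of the edges of the `i`-th path of the parallel
composition in even positions (positions `2, 4, 6, ...`, i.e. indices `1, 3, 5, ...`). -/
noncomputable def evenProd {ι : Type} (K : Type) [Field K] (k : ι → ℕ) (i : ι) :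
    MvPolynomial ((i : ι) × Fin (k i)) K :=
  ∏ m : Fin (k i / 2), X ⟨i, ⟨2 * m.1 + 1, by have := m.2; omega⟩⟩

/-!
A degree `d` attains the Hilbert function value `|X|` exactly when, for each point of `X`, some
form of degree `d` is nonzero at that point and zero at all the others. Given such forms `f₁`, `f₂`
for the images of a point in `X₁` and `X₂`, the product `f₁ * f₂` isolates the point in `X`: where
it does not vanish, the edge coordinates in `E_{H₁}` and those in `E_{H₂}` are each rescaled by a
constant, and the two constants agree because the subgraphs share an edge.
-/

section Forms

variable {ι κ σ τ₁ τ₂ K : Type*} [Field K] {d d₁ d₂ : ℕ}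

/-- The linear map evaluating forms of degree `d` at each vector of the family `P`. The rank of this
map is the Hilbert function at `d` of the set of lines spanned by the vectors. -/
noncomputable def evalForms (P : ι → σ → K) (d : ℕ) :
    homogeneousSubmodule σ K d →ₗ[K] ι → K :=
  LinearMap.pi fun i => (aeval (P i)).toLinearMap ∘ₗ (homogeneousSubmodule σ K d).subtype

/-- Forms of degree `d` separate the lines spanned by the vectors of the family `P`: each line is
the only one at which a suitable form does not vanish. Lines are encoded as orbits of `Kˣ`, so that
different indices may represent the same line. -/
def SeparatesLines (P : ι → σ → K) (d : ℕ) : Prop :=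
  ∀ i, ∃ f : MvPolynomial σ K, f.IsHomogeneous d ∧ eval (P i) f ≠ 0 ∧
    ∀ j, eval (P j) f ≠ 0 → P j ∈ MulAction.orbit Kˣ (P i)

theorem eval_smul_of_isHomogeneous {R : Type*} [CommSemiring R] {f : MvPolynomial σ R}
    (hf : f.IsHomogeneous d) (c : R) (v : σ → R) : eval (c • v) f = c ^ d * eval v f := by
  rw [eval_eq, eval_eq, Finset.mul_sum]
  refine Finset.sum_congr rfl fun m hm => ?_
  have hdeg : ∑ s ∈ m.support, m s = d := by
    rw [← hf (mem_support_iff.mp hm), Finsupp.weight_apply, Finsupp.sum]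
    simp
  simp only [Pi.smul_apply, smul_eq_mul, mul_pow, Finset.prod_mul_distrib,
    Finset.prod_pow_eq_pow_sum, hdeg]
  ring

theorem eval_eq_zero_iff_of_mem_orbit {f : MvPolynomial σ K} (hf : f.IsHomogeneous d)
    {v w : σ → K} (h : w ∈ MulAction.orbit Kˣ v) : eval w f = 0 ↔ eval v f = 0 := by
  obtain ⟨c, rfl⟩ := h
  change eval ((c : K) • v) f = 0 ↔ _
  simp [eval_smul_of_isHomogeneous hf]

@[simp]
theorem evalForms_apply (P : ι → σ → K) (f : homogeneousSubmodule σ K d) (i : ι) :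
    evalForms P d f i = eval (P i) f.1 := by
  simp [evalForms, aeval_eq_eval]

theorem mem_ker_evalForms {P : ι → σ → K} {f : homogeneousSubmodule σ K d} :
    f ∈ LinearMap.ker (evalForms P d) ↔ ∀ i, eval (P i) f.1 = 0 := by
  simp [LinearMap.mem_ker, funext_iff]

theorem ker_evalForms_le_of_mem_orbit {P : ι → σ → K} {Q : κ → σ → K}
    (hQ : ∀ k, ∃ i, Q k ∈ MulAction.orbit Kˣ (P i)) :
    LinearMap.ker (evalForms P d) ≤ LinearMap.ker (evalForms Q d) := by
  intro f hf
  rw [mem_ker_evalForms] at hf ⊢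
  intro k
  obtain ⟨i, hi⟩ := hQ k
  exact (eval_eq_zero_iff_of_mem_orbit f.2 hi).mpr (hf i)

theorem SeparatesLines.of_mem_orbit {P : ι → σ → K} {Q : κ → σ → K} (hP : SeparatesLines P d)
    (hQ : ∀ k, ∃ i, Q k ∈ MulAction.orbit Kˣ (P i)) : SeparatesLines Q d := by
  intro k
  obtain ⟨i, hki⟩ := hQ k
  obtain ⟨f, hf, hfi, hf_ne⟩ := hP i
  refine ⟨f, hf, (eval_eq_zero_iff_of_mem_orbit hf hki).not.mpr hfi, fun l hl => ?_⟩
  obtain ⟨j, hlj⟩ := hQ l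
  have hji : P j ∈ MulAction.orbit Kˣ (P i) :=
    hf_ne j ((eval_eq_zero_iff_of_mem_orbit hf hlj).not.mp hl)
  rw [← MulAction.orbit_eq_iff] at hki hlj hji ⊢
  rw [hlj, hji, hki]

theorem SeparatesLines.comp {P : ι → σ → K} (hP : SeparatesLines P d) (g : κ → ι) :
    SeparatesLines (P ∘ g) d :=
  hP.of_mem_orbit fun k => ⟨g k, MulAction.mem_orbit_self _⟩

theorem finrank_range_eq_of_ker_eq {R M N₁ N₂ : Type*} [Ring R] [AddCommGroup M] [Module R M]
    [AddCommGroup N₁] [Module R N₁] [AddCommGroup N₂] [Module R N₂]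
    {f : M →ₗ[R] N₁} {g : M →ₗ[R] N₂} (h : LinearMap.ker f = LinearMap.ker g) :
    Module.finrank R (LinearMap.range f) = Module.finrank R (LinearMap.range g) := by
  rw [← f.quotKerEquivRange.finrank_eq, ← g.quotKerEquivRange.finrank_eq, h]

theorem evalForms_surjective_iff [Finite ι] {P : ι → σ → K}
    (hP : ∀ i j, P j ∈ MulAction.orbit Kˣ (P i) → j = i) :
    Function.Surjective (evalForms P d) ↔ SeparatesLines P d := by
  classical
  constructor
  · intro hsurj i
    obtain ⟨f, hf⟩ := hsurj (Pi.single i 1)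
    have hval (j : ι) : eval (P j) f.1 = Pi.single (M := fun _ => K) i 1 j := by
      rw [← hf, evalForms_apply]
    refine ⟨f.1, f.2, by simp [hval], fun j hj => ?_⟩
    obtain rfl : j = i := by
      by_contra hji
      simp [hval, hji] at hj
    exact MulAction.mem_orbit_self _
  · intro hsep
    rw [← LinearMap.range_eq_top, eq_top_iff, ← (Pi.basisFun K ι).span_eq, Submodule.span_le]
    rintro _ ⟨i, rfl⟩
    obtain ⟨f, hf, hfi, hf_ne⟩ := hsep i
    refine ⟨(eval (P i) f)⁻¹ • ⟨f, hf⟩, funext fun j => ?_⟩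
    rw [map_smul, Pi.smul_apply, evalForms_apply, Pi.basisFun_apply]
    by_cases hji : j = i
    · subst hji
      simp [hfi]
    · have hfj : eval (P j) f = 0 := by_contra fun h => hji (hP i j (hf_ne j h))
      simp [hfj, hji]

theorem finrank_range_evalForms_eq_ncard_iff [Finite ι] {P : ι → σ → K} :
    Module.finrank K (LinearMap.range (evalForms P d)) =
        (Set.range fun i => MulAction.orbit Kˣ (P i)).ncard ↔ SeparatesLines P d := by
  set line : ι → Set (σ → K) := fun i => MulAction.orbit Kˣ (P i)
  -- Choosing one vector on each line changes neither the rank nor separation.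
  set Q : Set.range line → σ → K := P ∘ Set.rangeSplitting line
  have orbit_Q (l : Set.range line) : MulAction.orbit Kˣ (Q l) = l :=
    Set.apply_rangeSplitting line l
  have Q_mem (l : Set.range line) : ∃ i, Q l ∈ MulAction.orbit Kˣ (P i) :=
    ⟨_, MulAction.mem_orbit_self _⟩
  have P_mem (i : ι) : ∃ l, P i ∈ MulAction.orbit Kˣ (Q l) :=
    ⟨⟨line i, i, rfl⟩, by rw [orbit_Q]; exact MulAction.mem_orbit_self _⟩
  have Q_inj (l m : Set.range line) (h : Q m ∈ MulAction.orbit Kˣ (Q l)) : m = l := by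
    rw [← MulAction.orbit_eq_iff, orbit_Q, orbit_Q] at h
    exact Subtype.ext h
  have ker_eq : LinearMap.ker (evalForms P d) = LinearMap.ker (evalForms Q d) :=
    (ker_evalForms_le_of_mem_orbit Q_mem).antisymm (ker_evalForms_le_of_mem_orbit P_mem)
  have card_eq : (Set.range line).ncard = Module.finrank K (Set.range line → K) := by
    have := Fintype.ofFinite (Set.range line)
    rw [Module.finrank_fintype_fun_eq_card, ← Nat.card_coe_set_eq, Nat.card_eq_fintype_card]
  calc Module.finrank K (LinearMap.range (evalForms P d)) = (Set.range line).ncard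
      ↔ LinearMap.range (evalForms Q d) = ⊤ := by
        rw [finrank_range_eq_of_ker_eq ker_eq, card_eq, Submodule.eq_top_iff_finrank_eq]
    _ ↔ SeparatesLines Q d := by
        rw [LinearMap.range_eq_top, evalForms_surjective_iff Q_inj]
    _ ↔ SeparatesLines P d := ⟨fun h => h.of_mem_orbit P_mem, fun h => h.of_mem_orbit Q_mem⟩

theorem mem_orbit_of_mul_eq_mul {v w : σ → K} (hv : v ≠ 0) (hw : w ≠ 0)
    (h : ∀ s t, w t * v s = w s * v t) : w ∈ MulAction.orbit Kˣ v := by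
  obtain ⟨s, hs : v s ≠ 0⟩ := Function.ne_iff.mp hv
  have w_eq (t : σ) : w t = w s / v s * v t := by
    rw [div_mul_eq_mul_div, eq_div_iff hs, h]
  have ratio_ne : w s / v s ≠ 0 := fun h0 => hw (funext fun t => by simp [w_eq t, h0])
  exact ⟨Units.mk0 _ ratio_ne, funext fun t => (w_eq t).symm⟩

theorem exists_linearForm_of_notMem_orbit {v w : σ → K} (hv : v ≠ 0) (hw : w ≠ 0)
    (h : w ∉ MulAction.orbit Kˣ v) :
    ∃ f : MvPolynomial σ K, f.IsHomogeneous 1 ∧ eval v f ≠ 0 ∧ eval w f = 0 := by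
  obtain ⟨s, t, hst⟩ : ∃ s t, w t * v s ≠ w s * v t := by
    by_contra! hall
    exact h (mem_orbit_of_mul_eq_mul hv hw hall)
  refine ⟨C (w t) * X s - C (w s) * X t,
    (isHomogeneous_C_mul_X _ _).sub (isHomogeneous_C_mul_X _ _), ?_, ?_⟩
  · simpa [sub_eq_zero] using hst
  · simp [mul_comm]

theorem exists_separatesLines [Finite ι] {P : ι → σ → K} (hP : ∀ i, P i ≠ 0) :
    ∃ d, SeparatesLines P d := by
  have := Fintype.ofFinite ι
  refine ⟨Fintype.card ι, fun i => ?_⟩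
  -- Including the indices `j` with `P j` on the line of `P i` makes the degree independent of `i`.
  have exists_linear (j : ι) : ∃ f : MvPolynomial σ K, f.IsHomogeneous 1 ∧ eval (P i) f ≠ 0 ∧
      (eval (P j) f ≠ 0 → P j ∈ MulAction.orbit Kˣ (P i)) := by
    by_cases hj : P j ∈ MulAction.orbit Kˣ (P i)
    · obtain ⟨s, hs⟩ := Function.ne_iff.mp (hP i)
      exact ⟨X s, isHomogeneous_X K s, by simpa using hs, fun _ => hj⟩
    · obtain ⟨f, hf, hfi, hfj⟩ := exists_linearForm_of_notMem_orbit (hP i) (hP j) hj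
      exact ⟨f, hf, hfi, fun h => absurd hfj h⟩
  choose f hf hfi hfj using exists_linear
  refine ⟨∏ j, f j, ?_, ?_, fun j hj => hfj j ?_⟩
  · simpa using IsHomogeneous.prod Finset.univ f (fun _ => 1) fun j _ => hf j
  · rw [map_prod]
    exact Finset.prod_ne_zero_iff.mpr fun j _ => hfi j
  · rw [map_prod] at hj
    exact Finset.prod_ne_zero_iff.mp hj j (Finset.mem_univ j)

theorem mem_orbit_of_cover {j₁ : τ₁ → σ} {j₂ : τ₂ → σ}
    (hcov : Set.range j₁ ∪ Set.range j₂ = Set.univ) {v w : σ → K} {s : σ}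
    (hs₁ : s ∈ Set.range j₁) (hs₂ : s ∈ Set.range j₂) (hvs : v s ≠ 0)
    (h₁ : w ∘ j₁ ∈ MulAction.orbit Kˣ (v ∘ j₁)) (h₂ : w ∘ j₂ ∈ MulAction.orbit Kˣ (v ∘ j₂)) :
    w ∈ MulAction.orbit Kˣ v := by
  obtain ⟨c₁, hc₁⟩ := h₁
  obtain ⟨c₂, hc₂⟩ := h₂
  have eq_on_range₁ : ∀ t ∈ Set.range j₁, (c₁ : K) * v t = w t :=
    Set.forall_mem_range.mpr (congrFun hc₁)
  have eq_on_range₂ : ∀ t ∈ Set.range j₂, (c₂ : K) * v t = w t :=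
    Set.forall_mem_range.mpr (congrFun hc₂)
  have hc : (c₁ : K) = c₂ :=
    mul_right_cancel₀ hvs ((eq_on_range₁ s hs₁).trans (eq_on_range₂ s hs₂).symm)
  refine ⟨c₁, funext fun t => ?_⟩
  rcases hcov.ge (Set.mem_univ t) with ht | ht
  · exact eq_on_range₁ t ht
  · exact (congrArg (· * v t) hc).trans (eq_on_range₂ t ht)

theorem SeparatesLines.add_of_cover {j₁ : τ₁ → σ} {j₂ : τ₂ → σ}
    (hcov : Set.range j₁ ∪ Set.range j₂ = Set.univ) {P : ι → σ → K} {s : σ}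
    (hs₁ : s ∈ Set.range j₁) (hs₂ : s ∈ Set.range j₂) (hPs : ∀ i, P i s ≠ 0)
    (h₁ : SeparatesLines (fun i => P i ∘ j₁) d₁) (h₂ : SeparatesLines (fun i => P i ∘ j₂) d₂) :
    SeparatesLines P (d₁ + d₂) := by
  intro i
  obtain ⟨f₁, hf₁, hf₁i, hf₁_ne⟩ := h₁ i
  obtain ⟨f₂, hf₂, hf₂i, hf₂_ne⟩ := h₂ i
  have eval_prod (j : ι) : eval (P j) (rename j₁ f₁ * rename j₂ f₂) =
      eval (P j ∘ j₁) f₁ * eval (P j ∘ j₂) f₂ := by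
    rw [map_mul, eval_rename, eval_rename]
  refine ⟨rename j₁ f₁ * rename j₂ f₂,
    hf₁.rename_isHomogeneous.mul hf₂.rename_isHomogeneous, ?_, fun j hj => ?_⟩
  · rw [eval_prod]
    exact mul_ne_zero hf₁i hf₂i
  · rw [eval_prod] at hj
    exact mem_orbit_of_cover hcov hs₁ hs₂ (hPs i)
      (hf₁_ne j (left_ne_zero_of_mul hj)) (hf₂_ne j (right_ne_zero_of_mul hj))

end Forms

namespace Multigraph

variable {V E : Type} {K : Type} [Field K] {d : ℕ}

theorem point_apply_ne_zero (G : Multigraph V E) (x : V → Kˣ) (e : E) : G.point K x e ≠ 0 := by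
  simp [point]

theorem mem_vanishingIdeal_iff_of_isHomogeneous (G : Multigraph V E) {f : MvPolynomial E K}
    (hf : f.IsHomogeneous d) :
    f ∈ G.vanishingIdeal K ↔ ∀ x : V → Kˣ, eval (G.point K x) f = 0 := by
  change (∀ (x : V → Kˣ) (n : ℕ), eval (G.point K x) (homogeneousComponent n f) = 0) ↔ _
  refine forall_congr' fun x => ⟨fun h => ?_, fun h n => ?_⟩
  · simpa [homogeneousComponent_of_mem hf] using h d
  · rw [homogeneousComponent_of_mem hf]
    split_ifs
    exacts [h, map_zero _]

theorem hilbert_eq_finrank_range_evalForms (G : Multigraph V E) (d : ℕ) :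
    G.hilbert K d = Module.finrank K (LinearMap.range (evalForms (G.point K) d)) := by
  rw [hilbert, ← LinearMap.range_domRestrict]
  refine finrank_range_eq_of_ker_eq (Submodule.ext fun f => ?_)
  rw [mem_ker_evalForms, ← G.mem_vanishingIdeal_iff_of_isHomogeneous f.2,
    ← Ideal.Quotient.eq_zero_iff_mem]
  rfl

variable [Finite K]

theorem hilbert_eq_ncard_iff_separatesLines [Finite V] (G : Multigraph V E) :
    G.hilbert K d = (G.toricSet K).ncard ↔ SeparatesLines (G.point K) d := by
  rw [hilbert_eq_finrank_range_evalForms]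
  exact finrank_range_evalForms_eq_ncard_iff

theorem reg_le_of_separatesLines [Finite V] {G : Multigraph V E}
    (h : SeparatesLines (G.point K) d) : G.reg K ≤ d :=
  Nat.sInf_le (G.hilbert_eq_ncard_iff_separatesLines.mpr h)

theorem separatesLines_reg [Finite V] [Nonempty E] (G : Multigraph V E) :
    SeparatesLines (G.point K) (G.reg K) := by
  have point_ne_zero (x : V → Kˣ) : G.point K x ≠ 0 :=
    Function.ne_iff.mpr ⟨Classical.arbitrary E, G.point_apply_ne_zero x _⟩
  obtain ⟨d, hd⟩ := exists_separatesLines point_ne_zero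
  have attained : {d | G.hilbert K d = (G.toricSet K).ncard}.Nonempty :=
    ⟨d, G.hilbert_eq_ncard_iff_separatesLines.mpr hd⟩
  exact G.hilbert_eq_ncard_iff_separatesLines.mp (Nat.sInf_mem attained)

theorem separatesLines_reg_subgraph [Finite V] [DecidableEq V] (G : Multigraph V E)
    {A : Finset E} (hA : A.Nonempty) :
    SeparatesLines (fun x => G.point K x ∘ ((↑) : A → E)) ((G.subgraph A).reg K) :=
  have : Nonempty {e // e ∈ A} := hA.to_subtype
  (G.subgraph A).separatesLines_reg.comp fun (x : V → Kˣ) v => x v.1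

end Multigraph

/-- **Proposition 2.7.**  Let `H₁, H₂` be subgraphs of `G` with
`E_G = E_{H₁} ∪ E_{H₂}` and `E_{H₁} ∩ E_{H₂} ≠ ∅`.  Then
`reg G ≤ reg H₁ + reg H₂`. -/
theorem reg_le_of_cover
    {V E : Type} [Fintype V] [DecidableEq V] [Fintype E] [DecidableEq E]
    (K : Type) [Field K] [Fintype K]
    (G : Multigraph V E) (hG : G.NoIsolated) (A₁ A₂ : Finset E)
    (hcov : A₁ ∪ A₂ = Finset.univ) (hint : (A₁ ∩ A₂).Nonempty) :
    G.reg K ≤ (G.subgraph A₁).reg K + (G.subgraph A₂).reg K := by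
  obtain ⟨e, he⟩ := hint
  obtain ⟨he₁, he₂⟩ := Finset.mem_inter.mp he
  have range_cover :
      Set.range ((↑) : A₁ → E) ∪ Set.range ((↑) : A₂ → E) = Set.univ := by
    simpa [Set.ext_iff, Finset.ext_iff] using hcov
  exact Multigraph.reg_le_of_separatesLines <|
    SeparatesLines.add_of_cover range_cover ⟨⟨e, he₁⟩, rfl⟩ ⟨⟨e, he₂⟩, rfl⟩
      (fun x => G.point_apply_ne_zero x e)
      (G.separatesLines_reg_subgraph ⟨e, he₁⟩) (G.separatesLines_reg_subgraph ⟨e, he₂⟩)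
end

section
/- Let G be the parallel composition of r ≥ 2 paths of lengths k_1,...,k_r with edges labeled as follows: setting σ_i = k_1 + ... + k_{i−1} (so σ_1 = 0), the edges of the i-th path P_i, listed consecutively from the common initial vertex, are t_{σ_i+1}, t_{σ_i+2}, ..., t_{σ_i+k_i}. For each i let f_i = t_{σ_i+1}·t_{σ_i+3}···t_{σ_i+2⌈k_i/2⌉−1} (the product of the edges of P_i in odd positions) and g_i = t_{σ_i+2}·t_{σ_i+4}···t_{σ_i+2⌊k_i/2⌋} (the product of the edges of P_i in even positions). If k_i and k_j have the same parity and i ≠ j, then f_i·g_j − f_j·g_i ∈ I(X), where X is the projective toric subset parameterized by G. -/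
open MvPolynomial

/-!
Let `y₀, ..., y_k` be the values of `x` at the successive vertices of a path of length `k`. Each of
`f` and `g` is a product of disjoint edges, so its value at the point given by `x` is the product
of `x` over the vertices it covers. If `k` is odd, `f` covers every vertex and `g` every interior
one, so `f = y₀ y_k g`; if `k` is even, `f` misses only the last vertex and `g` only the first, so
`f y_k = y₀ g`. Hence `f / g` depends only on the parity of `k` and on the two ends, which all the
paths share, and `f_i g_j - f_j g_i` is homogeneous when the parities of `k i` and `k j` agree.
-/

theorem prod_range_mul_succ_eq_prod_range_two_mul {M : Type*} [CommMonoid M] (y : ℕ → M) (a : ℕ) :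
    ∏ m ∈ Finset.range a, y (2 * m) * y (2 * m + 1) = ∏ n ∈ Finset.range (2 * a), y n := by
  induction a with
  | zero => rfl
  | succ a ih =>
    rw [Finset.prod_range_succ, ih, Nat.mul_succ, Finset.prod_range_succ, Finset.prod_range_succ,
      mul_assoc]

theorem isHomogeneous_prod_X {α σ R : Type*} [CommSemiring R] (s : Finset α) (e : α → σ) :
    (∏ a ∈ s, X (e a) : MvPolynomial σ R).IsHomogeneous s.card := by
  simpa only [Finset.card_eq_sum_ones] using
    IsHomogeneous.prod s _ (fun _ => 1) fun a _ => isHomogeneous_X R (e a)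

theorem Multigraph.mem_vanishingIdeal_iff_of_isHomogeneous_s14 {V E K : Type} [Field K]
    {G : Multigraph V E} {f : MvPolynomial E K} {d : ℕ} (hf : f.IsHomogeneous d) :
    f ∈ G.vanishingIdeal K ↔ ∀ x : V → Kˣ, eval (G.point K x) f = 0 := by
  refine ⟨fun h x => ?_, fun h x n => ?_⟩
  · simpa only [homogeneousComponent_eq_self hf] using h x d
  · rw [homogeneousComponent_of_mem hf]
    split_ifs
    · exact h x
    · exact map_zero _

section ParallelComposition

variable {ι : Type} (K : Type) [Field K] (k : ι → ℕ) (i : ι)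

theorem isHomogeneous_oddProd : (oddProd K k i).IsHomogeneous ((k i + 1) / 2) := by
  rw [← Finset.card_fin ((k i + 1) / 2)]
  exact isHomogeneous_prod_X _ _

theorem isHomogeneous_evenProd : (evenProd K k i).IsHomogeneous (k i / 2) := by
  rw [← Finset.card_fin (k i / 2)]
  exact isHomogeneous_prod_X _ _

theorem pcVert_zero : pcVert k i 0 = Sum.inl false :=
  dif_pos rfl

variable {k i} in
theorem pcVert_length (hi : 0 < k i) : pcVert k i (k i) = Sum.inl true := by
  rw [pcVert, dif_neg hi.ne', dif_neg (lt_irrefl _)]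

variable {K} (x : Bool ⊕ ((i : ι) × Fin (k i - 1)) → Kˣ)

theorem eval_point_oddProd :
    eval ((parallelComp k).point K x) (oddProd K k i) =
      ∏ n ∈ Finset.range (2 * ((k i + 1) / 2)), (x (pcVert k i n) : K) := by
  rw [← prod_range_mul_succ_eq_prod_range_two_mul, Finset.prod_range]
  simp [oddProd, Multigraph.point, parallelComp]

theorem eval_point_evenProd :
    eval ((parallelComp k).point K x) (evenProd K k i) =
      ∏ n ∈ Finset.range (2 * (k i / 2)), (x (pcVert k i (n + 1)) : K) := by
  rw [← prod_range_mul_succ_eq_prod_range_two_mul fun n => (x (pcVert k i (n + 1)) : K),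
    Finset.prod_range]
  simp [evenProd, Multigraph.point, parallelComp]

variable {k i}

theorem eval_point_oddProd_of_odd (hodd : Odd (k i)) :
    eval ((parallelComp k).point K x) (oddProd K k i) =
      x (Sum.inl false) * x (Sum.inl true) *
        eval ((parallelComp k).point K x) (evenProd K k i) := by
  have num_covered : 2 * ((k i + 1) / 2) = 2 * (k i / 2) + 1 + 1 := by grind
  have last_vert : pcVert k i (2 * (k i / 2) + 1) = Sum.inl true := by
    rw [Nat.two_mul_div_two_add_one_of_odd hodd, pcVert_length hodd.pos]
  rw [eval_point_oddProd, eval_point_evenProd, num_covered, Finset.prod_range_succ,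
    Finset.prod_range_succ', last_vert, pcVert_zero]
  ring

theorem eval_point_oddProd_of_even (hi : 0 < k i) (heven : Even (k i)) :
    eval ((parallelComp k).point K x) (oddProd K k i) =
      x (Sum.inl false) / x (Sum.inl true) *
        eval ((parallelComp k).point K x) (evenProd K k i) := by
  have num_covered : 2 * ((k i + 1) / 2) = k i := by grind
  rw [div_mul_eq_mul_div, eq_div_iff (Units.ne_zero _), eval_point_oddProd, eval_point_evenProd,
    num_covered, Nat.two_mul_div_two_of_even heven, ← pcVert_length hi, ← pcVert_zero k i,
    ← Finset.prod_range_succ, Finset.prod_range_succ', mul_comm]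

end ParallelComposition

theorem oddProd_mul_evenProd_sub_mem_vanishingIdeal_general
    {K ι : Type} [Field K] {k : ι → ℕ} {i j : ι} (hi : 0 < k i) (hj : 0 < k j)
    (hpar : Odd (k i) ↔ Odd (k j)) :
    oddProd K k i * evenProd K k j - oddProd K k j * evenProd K k i ∈
      (parallelComp k).vanishingIdeal K := by
  have same_degree : (k j + 1) / 2 + k i / 2 = (k i + 1) / 2 + k j / 2 := by grind
  have homogeneous_left := (isHomogeneous_oddProd K k i).mul (isHomogeneous_evenProd K k j)
  have homogeneous_right := (isHomogeneous_oddProd K k j).mul (isHomogeneous_evenProd K k i)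
  rw [same_degree] at homogeneous_right
  rw [Multigraph.mem_vanishingIdeal_iff_of_isHomogeneous_s14 (homogeneous_left.sub homogeneous_right)]
  intro x
  rw [map_sub, map_mul, map_mul]
  rcases Nat.even_or_odd (k i) with even_i | odd_i
  · have even_j : Even (k j) := by grind
    rw [eval_point_oddProd_of_even x hi even_i, eval_point_oddProd_of_even x hj even_j]
    ring
  · rw [eval_point_oddProd_of_odd x odd_i, eval_point_oddProd_of_odd x (hpar.1 odd_i)]
    ring

/-- **Equation (3.2).**  In the parallel composition of paths `P 0, ..., P (r-1)`, let
`f i` be the product of the edges of `P i` in odd positions and `g i` the product of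
the edges of `P i` in even positions.  If `k i` and `k j` have the same parity and
`i ≠ j`, then `f i · g j - f j · g i ∈ I(X)`. -/
theorem oddProd_mul_evenProd_sub_mem_vanishingIdeal
    (K : Type) [Field K] [Fintype K] (r : ℕ) (hr : 2 ≤ r)
    (k : Fin r → ℕ) (hk : ∀ i, 0 < k i)
    (i j : Fin r) (hij : i ≠ j) (hpar : Odd (k i) ↔ Odd (k j)) :
    oddProd K k i * evenProd K k j - oddProd K k j * evenProd K k i ∈
      (parallelComp k).vanishingIdeal K :=
  oddProd_mul_evenProd_sub_mem_vanishingIdeal_general (hk i) (hk j) hpar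
end
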